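/- Let n ≥ 1, let Φ₁, Φ₂: ℝⁿ → ℝ be symmetric gauge functions, let A ∈ ℂ^{n×n} be strictly positive-real (sectorial with all canonical phases in (−π/2,π/2)) with symmetric polar decomposition A = PUP, and let 0 ≤ r ≤ n. Let U = Vᴴ diag(e^{iθ₁},…,e^{iθₙ}) V be a unitary diagonalization of U with |θ₁| ≥ ⋯ ≥ |θₙ| and θ_k ∈ (−π/2,π/2), set Û_r = Vᴴ diag(e^{iθ₁},…,e^{iθ_r},1,…,1) V and Â_r = P Û_r P. Then Â_r is strictly positive-real with prank(Â_r) ≤ r, and for every strictly positive-real A_r ∈ ℂ^{n×n} with prank(A_r) ≤ r one has δ(A, Â_r) ≤ δ(A, A_r); i.e., the infimum of δ(A, A_r) over strictly positive-real A_r with prank(A_r) ≤ r is attained at Â_r. -/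

import Mathlib

noncomputable section

open Matrix
open scoped Classical ComplexOrder

namespace LowPrank

variable {n : ℕ}

/-- A matrix is sectorial if its numerical range does not contain `0`
(`star x ⬝ᵥ x = 1` encodes `‖x‖₂ = 1`). -/
def IsSectorial (A : Matrix (Fin n) (Fin n) ℂ) : Prop :=
  ∀ x : Fin n → ℂ, star x ⬝ᵥ x = 1 → star x ⬝ᵥ A.mulVec x ≠ 0

/-- The diagonal unitary matrix `diag (e^{iφ₁}, …, e^{iφₙ})`. -/
def phaseDiag (φ : Fin n → ℝ) : Matrix (Fin n) (Fin n) ℂ :=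
  Matrix.diagonal fun k => Complex.exp (Complex.I * (φ k : ℂ))

/-- `A = Tᴴ diag (e^{iφ₁}, …, e^{iφₙ}) T` with `T` invertible. -/
def IsSectorialDecomp (A T : Matrix (Fin n) (Fin n) ℂ) (φ : Fin n → ℝ) : Prop :=
  IsUnit T ∧ A = Tᴴ * phaseDiag φ * T

/-- `φ` is the (sorted, normalized) vector of canonical phases of `A`:
nonincreasing, spread `< π`, midpoint of the range in `(-π, π]`, and realizing a
sectorial decomposition of `A`. -/
def IsCanonicalPhases (A : Matrix (Fin n) (Fin n) ℂ) (φ : Fin n → ℝ) : Prop :=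
  Antitone φ ∧ (∀ i j, φ i - φ j < Real.pi) ∧
    (-Real.pi < ((⨆ i, φ i) + ⨅ i, φ i) / 2) ∧ (((⨆ i, φ i) + ⨅ i, φ i) / 2 ≤ Real.pi) ∧
    ∃ T, IsSectorialDecomp A T φ

/-- The canonical phases `φ₁(A) ≥ ⋯ ≥ φₙ(A)` of a sectorial matrix
(`phases A k` is the `(k+1)`-st largest canonical phase). -/
noncomputable def phases (A : Matrix (Fin n) (Fin n) ℂ) : Fin n → ℝ :=
  if h : ∃ φ, IsCanonicalPhases A φ then h.choose else 0

/-- The phase-rank: the number of nonzero canonical phases. -/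
noncomputable def prank (A : Matrix (Fin n) (Fin n) ℂ) : ℕ :=
  {k : Fin n | phases A k ≠ 0}.ncard

/-- Positive-imaginary: sectorial with all canonical phases in `[0, π)`. -/
def PositiveImaginary (A : Matrix (Fin n) (Fin n) ℂ) : Prop :=
  IsSectorial A ∧ ∀ k, phases A k ∈ Set.Ico 0 Real.pi

/-- Symmetric gauge function. -/
structure IsSymmetricGauge (Φ : (Fin n → ℝ) → ℝ) : Prop where
  pos : ∀ x, x ≠ 0 → 0 < Φ x
  smul : ∀ (ρ : ℝ) (x), Φ (ρ • x) = |ρ| * Φ x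
  subadd : ∀ x y, Φ (x + y) ≤ Φ x + Φ y
  perm : ∀ (σ : Equiv.Perm (Fin n)) (x), Φ (x ∘ σ) = Φ x
  abs : ∀ x, Φ (fun k => |x k|) = Φ x

/-- The set `S_p(A, r)` of `r`-half-truncations of `A`. -/
def Sp (A : Matrix (Fin n) (Fin n) ℂ) (r : ℕ) : Set (Matrix (Fin n) (Fin n) ℂ) :=
  {E | ∃ T, IsSectorialDecomp A T (phases A) ∧
    E = Tᴴ * Matrix.diagonal (fun k : Fin n =>
      if (k : ℕ) < r then Complex.exp (Complex.I * ((phases A k / 2 : ℝ) : ℂ)) else 1) * T}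

/-- Symmetric polar decomposition `A = P U P` with `P ≻ 0` Hermitian and `U` unitary sectorial. -/
def IsSymPolarDecomp (A P U : Matrix (Fin n) (Fin n) ℂ) : Prop :=
  P.PosDef ∧ U ∈ Matrix.unitaryGroup (Fin n) ℂ ∧ IsSectorial U ∧ A = P * U * P

/-- The positive-definite factor of the symmetric polar decomposition. -/
noncomputable def polarP (A : Matrix (Fin n) (Fin n) ℂ) : Matrix (Fin n) (Fin n) ℂ :=
  if h : ∃ P U, IsSymPolarDecomp A P U then h.choose else 1

/-- The unitary factor of the symmetric polar decomposition. -/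
noncomputable def polarU (A : Matrix (Fin n) (Fin n) ℂ) : Matrix (Fin n) (Fin n) ℂ :=
  if h : ∃ P U, IsSymPolarDecomp A P U then h.choose_spec.choose else 1

/-- Nondecreasingly sorted vector of the real parts of the eigenvalues of `M`
(with multiplicity, as roots of the characteristic polynomial). -/
noncomputable def eigRe (M : Matrix (Fin n) (Fin n) ℂ) : Fin n → ℝ :=
  fun k => ((M.charpoly.roots.map Complex.re).sort (· ≤ ·)).getD (k : ℕ) 0

/-- Nondecreasingly sorted vector of the arguments of the eigenvalues of `W`
(with multiplicity, as roots of the characteristic polynomial). -/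
noncomputable def eigArg (W : Matrix (Fin n) (Fin n) ℂ) : Fin n → ℝ :=
  fun k => ((W.charpoly.roots.map Complex.arg).sort (· ≤ ·)).getD (k : ℕ) 0

/-- The geodesic distance `δ(A,B) = sqrt(Φ₁(log μ)² + Φ₂(θ)²)` where `μ` are the
eigenvalues of `P_A⁻¹ P_B² P_A⁻¹` and `θ` the eigenvalue arguments of `U_Aᴴ U_B`. -/
noncomputable def geoDist (Φ₁ Φ₂ : (Fin n → ℝ) → ℝ) (A B : Matrix (Fin n) (Fin n) ℂ) : ℝ :=
  Real.sqrt ((Φ₁ fun k => Real.log (eigRe ((polarP A)⁻¹ * polarP B ^ 2 * (polarP A)⁻¹) k)) ^ 2 +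
    (Φ₂ (eigArg ((polarU A)ᴴ * polarU B))) ^ 2)

/-- Strictly positive-real: sectorial with all canonical phases in `(-π/2, π/2)`. -/
def StrictlyPositiveReal (A : Matrix (Fin n) (Fin n) ℂ) : Prop :=
  IsSectorial A ∧ ∀ k, phases A k ∈ Set.Ioo (-(Real.pi / 2)) (Real.pi / 2)

/-!
A sectorial matrix has a unique symmetric polar decomposition `A = P_A U_A P_A`. Writing `T = W P`
with `W` unitary and `P` positive definite in a sectorial decomposition `A = Tᴴ D T` gives
`U_A = Wᴴ D W`, so `prank A` is the rank of `U_A - 1`.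

If `prank B ≤ r`, then `U_B` fixes a subspace of dimension at least `n - r`, on which the quadratic
form of `U_Aᴴ U_B` is that of `U_Aᴴ`. Comparing real parts, the Courant–Fischer dimension count
bounds `|θ_{i+r}|` by the `i`-th largest absolute eigenvalue argument of `U_Aᴴ U_B`. Symmetric gauge
functions are monotone in the absolute values of the coordinates, so
`Φ₂(0, …, 0, θ_{r+1}, …, θₙ) ≤ δ(A, B)`. The truncation attains this bound: it has the same
positive definite factor as `A`, so the `Φ₁` term of its distance to `A` vanishes.
-/

section NumericalRange

open scoped InnerProductSpace

variable {E : Type*} [NormedAddCommGroup E] [InnerProductSpace ℂ E]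

/-- The numerical range `{⟪x, T x⟫ : ‖x‖ = 1}` of a linear endomorphism; a matrix is sectorial when
the numerical range of its action on Euclidean space misses `0`. -/
def numericalRange (T : E →ₗ[ℂ] E) : Set ℂ :=
  (fun x => ⟪x, T x⟫_ℂ) '' Metric.sphere 0 1

lemma mem_numericalRange_of_inner_eq {T : E →ₗ[ℂ] E} {x : E} {z : ℂ} (hx : x ≠ 0)
    (h : ⟪x, T x⟫_ℂ = ‖x‖ ^ 2 * z) : z ∈ numericalRange T := by
  have hx' : (‖x‖ : ℂ) ≠ 0 := by simpa using hx
  refine ⟨(‖x‖⁻¹ : ℂ) • x, by simp [norm_smul, hx], ?_⟩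
  simp only [map_smul, inner_smul_left, inner_smul_right, h, map_inv₀, Complex.conj_ofReal]
  field_simp

lemma inner_lineMap_map_lineMap (T : E →ₗ[ℂ] E) (x y : E) (s : ℝ) :
    ⟪AffineMap.lineMap x y s, T (AffineMap.lineMap x y s)⟫_ℂ =
      (1 - s) ^ 2 * ⟪x, T x⟫_ℂ + s * (1 - s) * (⟪x, T y⟫_ℂ + ⟪y, T x⟫_ℂ) + s ^ 2 * ⟪y, T y⟫_ℂ := by
  simp only [AffineMap.lineMap_apply_module, ← Complex.coe_smul, map_add, map_smul, inner_add_left,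
    inner_add_right, inner_smul_left, inner_smul_right, Complex.conj_ofReal]
  push_cast
  ring

lemma exists_unit_smul_cross_term_im_eq_zero (T : E →ₗ[ℂ] E) (x y : E) :
    ∃ c : ℂ, ‖c‖ = 1 ∧ (⟪c • x, T y⟫_ℂ + ⟪y, T (c • x)⟫_ℂ).im = 0 := by
  obtain ⟨c, hc, h⟩ := RCLike.exists_norm_eq_mul_self (⟪y, T x⟫_ℂ - ⟪T y, x⟫_ℂ)
  refine ⟨c, hc, ?_⟩
  have hre : (⟪T y, x⟫_ℂ).re = (⟪x, T y⟫_ℂ).re := inner_re_symm (𝕜 := ℂ) _ _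
  have him : (⟪T y, x⟫_ℂ).im = -(⟪x, T y⟫_ℂ).im := inner_im_symm (𝕜 := ℂ) _ _
  have h := congrArg Complex.im h
  simp only [Complex.coe_algebraMap, Complex.ofReal_im, Complex.mul_im, Complex.sub_im,
    Complex.sub_re, hre, him] at h
  simp only [map_smul, inner_smul_left, inner_smul_right, Complex.add_im, Complex.mul_im,
    Complex.conj_im, Complex.conj_re]
  linarith

lemma mem_numericalRange_of_mem_Icc {T : E →ₗ[ℂ] E} {x y : E} (hx : ‖x‖ = 1) (hy : ‖y‖ = 1)
    (hTx : ⟪x, T x⟫_ℂ = 0) (hTy : ⟪y, T y⟫_ℂ = 1) {t : ℝ} (ht : t ∈ Set.Icc (0 : ℝ) 1) :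
    (t : ℂ) ∈ numericalRange T := by
  obtain ⟨c, hc, him⟩ := exists_unit_smul_cross_term_im_eq_zero T x y
  set g := (⟪c • x, T y⟫_ℂ + ⟪y, T (c • x)⟫_ℂ).re
  have hg : ⟪c • x, T y⟫_ℂ + ⟪y, T (c • x)⟫_ℂ = g := Complex.ext rfl (by simpa using him)
  let u : ℝ → E := fun s => AffineMap.lineMap (c • x) y s
  have hform (s : ℝ) : ⟪u s, T (u s)⟫_ℂ = ((s * (1 - s) * g + s ^ 2 : ℝ) : ℂ) := by
    rw [inner_lineMap_map_lineMap, hg, hTy]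
    simp [hTx]
  have hu (s : ℝ) : u s ≠ 0 := by
    intro h0
    have hs : s = 0 := by
      have hlin : (s : ℂ) • y = -((1 - s : ℝ) : ℂ) • (c • x) := by
        rw [neg_smul, eq_neg_iff_add_eq_zero, ← h0]
        simp only [u, AffineMap.lineMap_apply_module, Complex.coe_smul, add_comm]
      have := congrArg (fun v => ⟪v, T v⟫_ℂ) hlin
      simpa [inner_smul_left, inner_smul_right, hTx, hTy, -Complex.coe_smul] using this
    have := congrArg norm h0
    simp [u, hs, norm_smul, hc, hx] at this
  have hcont : ContinuousOn (fun s => (s * (1 - s) * g + s ^ 2) / ‖u s‖ ^ 2) (Set.Icc 0 1) := by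
    have : Continuous u := AffineMap.lineMap_continuous
    exact ContinuousOn.div (by fun_prop) (by fun_prop) fun s _ => by simpa using hu s
  obtain ⟨s, -, hs⟩ := intermediate_value_Icc zero_le_one hcont
    (show t ∈ _ by simpa [u, hy] using ht)
  refine mem_numericalRange_of_inner_eq (hu s) ?_
  have : ‖u s‖ ≠ 0 := norm_ne_zero_iff.2 (hu s)
  rw [hform, ← hs]
  push_cast
  field_simp

/-- The Toeplitz–Hausdorff theorem. -/
theorem convex_numericalRange (T : E →ₗ[ℂ] E) : Convex ℝ (numericalRange T) := by
  rw [convex_iff_segment_subset]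
  rintro _ ⟨x, hx, rfl⟩ _ ⟨y, hy, rfl⟩ _ hz
  rw [mem_sphere_zero_iff_norm] at hx hy
  rw [segment_eq_image_lineMap] at hz
  obtain ⟨t, ht, rfl⟩ := hz
  set a := ⟪x, T x⟫_ℂ with ha
  set b := ⟪y, T y⟫_ℂ with hb
  rcases eq_or_ne a b with hab | hab
  · exact ⟨y, by simpa using hy, by simp [← ha, ← hb, hab]⟩
  have hba : b - a ≠ 0 := sub_ne_zero.2 hab.symm
  let S : E →ₗ[ℂ] E := (b - a)⁻¹ • (T - a • LinearMap.id)
  have hS (v : E) (hv : ‖v‖ = 1) : ⟪v, S v⟫_ℂ = (b - a)⁻¹ * (⟪v, T v⟫_ℂ - a) := by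
    simp [S, inner_self_eq_norm_sq_to_K, hv]
  obtain ⟨v, hv, hvt⟩ := mem_numericalRange_of_mem_Icc (T := S) hx hy
    (by rw [hS x hx]; simp [ha]) (by rw [hS y hy, inv_mul_cancel₀ hba]) ht
  refine ⟨v, hv, ?_⟩
  dsimp only at hvt ⊢
  rw [hS v (by simpa using hv), inv_mul_eq_iff_eq_mul₀ hba] at hvt
  rw [AffineMap.lineMap_apply_module', Complex.real_smul]
  linear_combination hvt

lemma isCompact_numericalRange [FiniteDimensional ℂ E] (T : E →ₗ[ℂ] E) :
    IsCompact (numericalRange T) :=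
  have : ProperSpace E := FiniteDimensional.proper ℂ E
  (isCompact_sphere 0 1).image (continuous_id.inner T.continuous_of_finiteDimensional)

end NumericalRange

lemma exists_rotation_re_pos {S : Set ℂ} (hconv : Convex ℝ S) (hclosed : IsClosed S)
    (h0 : 0 ∉ S) : ∃ c : ℂ, ‖c‖ = 1 ∧ ∀ z ∈ S, 0 < (c * z).re := by
  obtain ⟨f, u, hu, hf⟩ := geometric_hahn_banach_point_closed hconv hclosed h0
  rw [map_zero] at hu
  set w : ℂ := ⟨f 1, -f Complex.I⟩ with hw
  have hfw (z : ℂ) : f z = (w * z).re := by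
    conv_lhs => rw [show z = z.re • (1 : ℂ) + z.im • Complex.I by apply Complex.ext <;> simp]
    rw [map_add, map_smul, map_smul]
    simp [hw]
    ring
  rcases eq_or_ne w 0 with hw0 | hw0
  · refine ⟨1, norm_one, fun z hz => ?_⟩
    have := hu.trans (hf z hz)
    simp [hfw, hw0] at this
  · refine ⟨(‖w‖⁻¹ : ℝ) • w, by simp [hw0], fun z hz => ?_⟩
    rw [smul_mul_assoc, Complex.smul_re, ← hfw]
    exact smul_pos (by positivity) (hu.trans (hf z hz))

section QuadraticForm

variable {ι κ : Type*} [Fintype ι] [Fintype κ]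

lemma star_dotProduct_conj_diagonal_mulVec [DecidableEq κ] (T : Matrix κ ι ℂ) (d : κ → ℂ)
    (x : ι → ℂ) :
    star x ⬝ᵥ (Tᴴ * diagonal d * T) *ᵥ x = ∑ k, d k * (‖(T *ᵥ x) k‖ ^ 2 : ℝ) := by
  rw [← mulVec_mulVec, ← mulVec_mulVec, dotProduct_mulVec, ← star_mulVec]
  refine Finset.sum_congr rfl fun k _ => ?_
  rw [mulVec_diagonal, Pi.star_apply, Complex.ofReal_pow, ← Complex.conj_mul', starRingEnd_apply]
  ring

lemma star_dotProduct_self_eq_sum_norm_sq (x : ι → ℂ) :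
    star x ⬝ᵥ x = (∑ k, ‖x k‖ ^ 2 : ℝ) := by
  push_cast
  exact Finset.sum_congr rfl fun k _ => Complex.conj_mul' (x k)

lemma sum_norm_sq_mulVec [DecidableEq ι] {Q : Matrix ι ι ℂ} (hQ : Q ∈ unitaryGroup ι ℂ)
    (x : ι → ℂ) : ∑ k, ‖(Q *ᵥ x) k‖ ^ 2 = ∑ k, ‖x k‖ ^ 2 := by
  rw [← Complex.ofReal_inj, ← star_dotProduct_self_eq_sum_norm_sq,
    ← star_dotProduct_self_eq_sum_norm_sq, star_mulVec, dotProduct_mulVec, vecMul_vecMul,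
    ← star_eq_conjTranspose, mem_unitaryGroup_iff'.1 hQ, vecMul_one]

lemma star_dotProduct_conjTranspose_mulVec (A : Matrix ι ι ℂ) (x : ι → ℂ) :
    star x ⬝ᵥ Aᴴ *ᵥ x = star (star x ⬝ᵥ A *ᵥ x) := by
  rw [star_dotProduct, star_mulVec, conjTranspose_conjTranspose, dotProduct_mulVec]

lemma star_dotProduct_add_conjTranspose_mulVec (A : Matrix ι ι ℂ) (x : ι → ℂ) :
    star x ⬝ᵥ (A + Aᴴ) *ᵥ x = (2 * (star x ⬝ᵥ A *ᵥ x).re : ℝ) := by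
  rw [add_mulVec, dotProduct_add, star_dotProduct_conjTranspose_mulVec]
  exact Complex.add_conj _

lemma posDef_add_conjTranspose_iff {A : Matrix ι ι ℂ} :
    (A + Aᴴ).PosDef ↔ ∀ x, x ≠ 0 → 0 < (star x ⬝ᵥ A *ᵥ x).re := by
  rw [posDef_iff_dotProduct_mulVec]
  simp only [star_dotProduct_add_conjTranspose_mulVec, Complex.zero_lt_real, ne_eq]
  simp [isHermitian_add_transpose_self]

end QuadraticForm

section Sectorial

variable {A : Matrix (Fin n) (Fin n) ℂ}

lemma inner_toEuclideanLin (A : Matrix (Fin n) (Fin n) ℂ) (x : EuclideanSpace ℂ (Fin n)) :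
    inner ℂ x (toEuclideanLin A x) = star x.ofLp ⬝ᵥ A *ᵥ x.ofLp := by
  rw [EuclideanSpace.inner_eq_star_dotProduct, dotProduct_comm]
  rfl

lemma isSectorial_iff_zero_notMem_numericalRange :
    IsSectorial A ↔ 0 ∉ numericalRange (toEuclideanLin A) := by
  have hunit (x : EuclideanSpace ℂ (Fin n)) : ‖x‖ = 1 ↔ star x.ofLp ⬝ᵥ x.ofLp = 1 := by
    rw [star_dotProduct_self_eq_sum_norm_sq, ← EuclideanSpace.norm_sq_eq, Complex.ofReal_eq_one,
      pow_eq_one_iff_of_nonneg (norm_nonneg x) two_ne_zero]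
  simp [IsSectorial, numericalRange, inner_toEuclideanLin, hunit,
    (WithLp.equiv 2 (Fin n → ℂ)).symm.forall_congr_left]

lemma IsSectorial.dotProduct_mulVec_ne_zero (hA : IsSectorial A) {x : Fin n → ℂ} (hx : x ≠ 0) :
    star x ⬝ᵥ A *ᵥ x ≠ 0 := fun h =>
  isSectorial_iff_zero_notMem_numericalRange.1 hA <|
    mem_numericalRange_of_inner_eq (x := WithLp.toLp 2 x) (by simpa using hx)
      (by rw [inner_toEuclideanLin, h, mul_zero])

lemma isSectorial_of_posDef_add_conjTranspose (hA : (A + Aᴴ).PosDef) : IsSectorial A := by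
  intro x hx h0
  have := posDef_add_conjTranspose_iff.1 hA x (by rintro rfl; simp at hx)
  simp [h0] at this

lemma IsSectorial.exists_posDef_smul_add_conjTranspose (hA : IsSectorial A) :
    ∃ c : ℂ, ‖c‖ = 1 ∧ (c • A + (c • A)ᴴ).PosDef := by
  obtain ⟨c, hc, hpos⟩ := exists_rotation_re_pos (convex_numericalRange _)
    (isCompact_numericalRange _).isClosed (isSectorial_iff_zero_notMem_numericalRange.1 hA)
  refine ⟨c, hc, posDef_add_conjTranspose_iff.2 fun x hx => ?_⟩
  have hx' : 0 < ‖WithLp.toLp 2 x‖ := by simpa using hx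
  have hmem : ((‖WithLp.toLp 2 x‖ ^ 2)⁻¹ : ℝ) * (star x ⬝ᵥ A *ᵥ x) ∈
      numericalRange (toEuclideanLin A) := by
    refine mem_numericalRange_of_inner_eq (x := WithLp.toLp 2 x) (by simpa using hx) ?_
    rw [inner_toEuclideanLin]
    push_cast
    field_simp
  have hc := hpos _ hmem
  rw [mul_left_comm, Complex.re_ofReal_mul] at hc
  rw [smul_mulVec, dotProduct_smul, smul_eq_mul]
  exact pos_of_mul_pos_right hc (by positivity)

end Sectorial

section Congruence

variable {ι : Type*} [Fintype ι]

open scoped MatrixOrder Matrix.Norms.L2Operator in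
lemma exists_posDef_mul_self_eq {H : Matrix ι ι ℂ} (hH : H.PosDef) :
    ∃ P : Matrix ι ι ℂ, P.PosDef ∧ P * P = H :=
  ⟨CFC.sqrt H, (hH.isStrictlyPositive.sqrt).posDef, CFC.sqrt_mul_sqrt_self H hH.posSemidef.nonneg⟩

variable [DecidableEq ι]

lemma exists_unitary_diagonal_of_isHermitian {K : Matrix ι ι ℂ} (hK : K.IsHermitian) :
    ∃ Q ∈ unitaryGroup ι ℂ, ∃ d : ι → ℝ, K = Qᴴ * diagonal (fun k => (d k : ℂ)) * Q := by
  refine ⟨(hK.eigenvectorUnitary : Matrix ι ι ℂ)ᴴ, (star hK.eigenvectorUnitary).2,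
    hK.eigenvalues, ?_⟩
  rw [conjTranspose_conjTranspose]
  exact hK.spectral_theorem.trans (Unitary.conjStarAlgAut_apply _ _)

lemma exists_congruence_diagonal {H K : Matrix ι ι ℂ} (hH : H.PosDef) (hK : K.IsHermitian) :
    ∃ T : Matrix ι ι ℂ, IsUnit T ∧ ∃ d : ι → ℝ,
      H = Tᴴ * T ∧ K = Tᴴ * diagonal (fun k => (d k : ℂ)) * T := by
  obtain ⟨S, hS, hSH⟩ := exists_posDef_mul_self_eq hH
  have hdet := (isUnit_iff_isUnit_det _).1 hS.isUnit
  obtain ⟨Q, hQ, d, hd⟩ := exists_unitary_diagonal_of_isHermitian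
    (isHermitian_conjTranspose_mul_mul S⁻¹ hK)
  have hST : Sᴴ = S := hS.isHermitian
  refine ⟨Q * S, (Unitary.isUnit_coe (U := ⟨Q, hQ⟩)).mul hS.isUnit, d, ?_, ?_⟩
  · rw [conjTranspose_mul, hST, Matrix.mul_assoc, ← Matrix.mul_assoc Qᴴ, ← star_eq_conjTranspose,
      mem_unitaryGroup_iff'.1 hQ, Matrix.one_mul, hSH]
  · calc K = S * ((S⁻¹)ᴴ * K * S⁻¹) * S := by
          rw [conjTranspose_nonsing_inv, hST, Matrix.mul_assoc, Matrix.mul_assoc,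
            nonsing_inv_mul _ hdet, Matrix.mul_one, mul_nonsing_inv_cancel_left _ _ hdet]
      _ = _ := by rw [hd, conjTranspose_mul, hST]; simp only [Matrix.mul_assoc]

lemma conj_submatrix_diagonal_comp {R : Type*} [NonUnitalSemiring R] [StarRing R]
    (T : Matrix ι ι R) (d : ι → R) (τ : Equiv.Perm ι) :
    (T.submatrix τ id)ᴴ * diagonal (d ∘ τ) * T.submatrix τ id = Tᴴ * diagonal d * T := by
  rw [← submatrix_diagonal_equiv, conjTranspose_submatrix, submatrix_mul_equiv,
    submatrix_mul_equiv, submatrix_id_id]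

lemma isUnit_submatrix_id {R : Type*} [CommRing R] {T : Matrix ι ι R} (hT : IsUnit T)
    (τ : Equiv.Perm ι) : IsUnit (T.submatrix τ id) :=
  (isUnit_submatrix_equiv τ (Equiv.refl ι)).2 hT

end Congruence

section CanonicalPhases

variable {A T : Matrix (Fin n) (Fin n) ℂ} {φ : Fin n → ℝ}

lemma isSectorialDecomp_diagonal (hT : IsUnit T) {z : Fin n → ℂ} (hz : ∀ k, z k ≠ 0) :
    IsSectorialDecomp (Tᴴ * diagonal z * T)
      (diagonal (fun k => ((√‖z k‖ : ℝ) : ℂ)) * T) (fun k => (z k).arg) := by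
  refine ⟨IsUnit.mul ?_ hT, ?_⟩
  · simp [isUnit_iff_isUnit_det, Finset.prod_ne_zero_iff, hz]
  · rw [conjTranspose_mul, diagonal_conjTranspose, phaseDiag, ← Matrix.mul_assoc,
      Matrix.mul_assoc _ (diagonal _) (diagonal _), diagonal_mul_diagonal,
      Matrix.mul_assoc _ (diagonal _) (diagonal _), diagonal_mul_diagonal]
    congr 3
    funext k
    have hsq : ((√‖z k‖ : ℝ) : ℂ) * (√‖z k‖ : ℝ) = ‖z k‖ := by
      rw [← Complex.ofReal_mul, Real.mul_self_sqrt (norm_nonneg _)]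
    simp only [Pi.star_apply, RCLike.star_def, Complex.conj_ofReal]
    rw [mul_left_comm, hsq, mul_comm, mul_comm Complex.I, Complex.norm_mul_exp_arg_mul_I]

lemma exists_isSectorialDecomp_of_posDef (hA : (A + Aᴴ).PosDef) :
    ∃ T φ, IsSectorialDecomp A T φ ∧ ∀ k, |φ k| < Real.pi / 2 := by
  have hK : (-Complex.I • (A - Aᴴ)).IsHermitian := by
    simp [IsHermitian, sub_eq_add_neg, add_comm]
  obtain ⟨T, hT, d, hH, hd⟩ := exists_congruence_diagonal hA hK
  have hA' : A = Tᴴ * diagonal (fun k => (1 + Complex.I * d k) / 2) * T := by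
    have hdiag : diagonal (fun k => (1 + Complex.I * d k) / 2) =
        (2⁻¹ : ℂ) • ((1 : Matrix (Fin n) (Fin n) ℂ) +
          Complex.I • diagonal (fun k => (d k : ℂ))) := by
      rw [← diagonal_one, ← diagonal_smul, diagonal_add, ← diagonal_smul]
      congr 1
      funext k
      simp only [Pi.smul_apply, smul_eq_mul]
      ring
    rw [hdiag, Matrix.mul_smul, Matrix.smul_mul, Matrix.mul_add, Matrix.add_mul, Matrix.mul_one,
      Matrix.mul_smul, Matrix.smul_mul, ← hH, ← hd, smul_smul, mul_neg, Complex.I_mul_I]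
    module
  rw [hA']
  have hre (k : Fin n) : 0 < (((1 : ℂ) + Complex.I * d k) / 2).re := by simp
  refine ⟨_, _, isSectorialDecomp_diagonal hT fun k h => ?_, fun k =>
    Complex.abs_arg_lt_pi_div_two_iff.2 (Or.inl (hre k))⟩
  simpa [h] using hre k

lemma IsSectorial.exists_isSectorialDecomp (hA : IsSectorial A) :
    ∃ (α : ℝ) (T : _) (φ : _), IsSectorialDecomp A T φ ∧ ∀ k, |φ k - α| < Real.pi / 2 := by
  obtain ⟨c, hc, hpos⟩ := hA.exists_posDef_smul_add_conjTranspose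
  obtain ⟨T, φ, ⟨hT, hdec⟩, hφ⟩ := exists_isSectorialDecomp_of_posDef hpos
  have hc' : Complex.exp (Complex.I * c.arg) = c := by
    simpa [hc, mul_comm] using Complex.norm_mul_exp_arg_mul_I c
  refine ⟨-c.arg, T, fun k => φ k - c.arg, ⟨hT, ?_⟩, by simpa using hφ⟩
  have hphase : phaseDiag φ = c • phaseDiag (fun k => φ k - c.arg) := by
    rw [phaseDiag, phaseDiag, ← diagonal_smul]
    congr 1
    funext k
    nth_rw 1 [Pi.smul_apply, smul_eq_mul, ← hc', ← Complex.exp_add]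
    push_cast
    ring_nf
  rw [hphase, Matrix.mul_smul, Matrix.smul_mul] at hdec
  exact smul_right_injective _ (by rintro rfl; simp at hc) hdec

lemma phaseDiag_add_zsmul_two_pi (φ : Fin n → ℝ) (z : ℤ) :
    phaseDiag (fun k => φ k + z • (2 * Real.pi)) = phaseDiag φ := by
  rw [phaseDiag, phaseDiag]
  congr 1
  funext k
  rw [Complex.exp_eq_exp_iff_exists_int]
  exact ⟨z, by push_cast; ring⟩

lemma exists_perm_antitone_comp {α : Type*} [LinearOrder α] (f : Fin n → α) :
    ∃ σ : Equiv.Perm (Fin n), Antitone (f ∘ σ) :=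
  ⟨Tuple.sort (OrderDual.toDual ∘ f), fun _ _ h => Tuple.monotone_sort (OrderDual.toDual ∘ f) h⟩

lemma exists_zsmul_midpoint_mem_Ioc (f : Fin n → ℝ) :
    ∃ z : ℤ, ((⨆ i, f i + z • (2 * Real.pi)) + ⨅ i, f i + z • (2 * Real.pi)) / 2 ∈
      Set.Ioc (-Real.pi) Real.pi := by
  rcases isEmpty_or_nonempty (Fin n) with _ | _
  · exact ⟨0, by simp [Real.iSup_of_isEmpty, Real.iInf_of_isEmpty, Real.pi_pos, Real.pi_pos.le]⟩
  · obtain ⟨z, hz, -⟩ := existsUnique_add_zsmul_mem_Ioc Real.two_pi_pos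
      (((⨆ i, f i) + ⨅ i, f i) / 2) (-Real.pi)
    refine ⟨z, ?_⟩
    rw [← ciSup_add (Set.finite_range f).bddAbove, ← ciInf_add (Set.finite_range f).bddBelow]
    convert hz using 1 <;> ring_nf

lemma IsSectorialDecomp.exists_isCanonicalPhases (h : IsSectorialDecomp A T φ)
    (hspread : ∀ i j, φ i - φ j < Real.pi) : ∃ ψ, IsCanonicalPhases A ψ := by
  obtain ⟨τ, hτ⟩ := exists_perm_antitone_comp φ
  obtain ⟨z, hz⟩ := exists_zsmul_midpoint_mem_Ioc (φ ∘ τ)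
  refine ⟨fun k => (φ ∘ τ) k + z • (2 * Real.pi), fun i j hij => add_le_add_left (hτ hij) _,
    fun i j => by simpa using hspread (τ i) (τ j), hz.1, hz.2, T.submatrix τ id,
    isUnit_submatrix_id h.1 τ, ?_⟩
  rw [phaseDiag_add_zsmul_two_pi, h.2]
  exact (conj_submatrix_diagonal_comp T _ τ).symm

lemma IsSectorial.isCanonicalPhases_phases (hA : IsSectorial A) :
    IsCanonicalPhases A (phases A) := by
  obtain ⟨α, T, φ, hdec, hφ⟩ := hA.exists_isSectorialDecomp
  have hex : ∃ ψ, IsCanonicalPhases A ψ := hdec.exists_isCanonicalPhases fun i j => by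
    linarith [(abs_lt.1 (hφ i)).2, (abs_lt.1 (hφ j)).1]
  rw [phases, dif_pos hex]
  exact hex.choose_spec

end CanonicalPhases

section StrictlyPositiveReal

variable {A T : Matrix (Fin n) (Fin n) ℂ} {φ : Fin n → ℝ}

lemma posDef_conj_diagonal_add_conjTranspose_iff {ι : Type*} [Fintype ι] [DecidableEq ι]
    {T : Matrix ι ι ℂ} (hT : IsUnit T) (d : ι → ℂ) :
    (Tᴴ * diagonal d * T + (Tᴴ * diagonal d * T)ᴴ).PosDef ↔ ∀ k, 0 < (d k).re := by
  have h : Tᴴ * diagonal d * T + (Tᴴ * diagonal d * T)ᴴ =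
      star T * diagonal (fun k => ((2 * (d k).re : ℝ) : ℂ)) * T := by
    simp only [conjTranspose_mul, conjTranspose_conjTranspose, diagonal_conjTranspose,
      ← Matrix.mul_assoc, ← Matrix.add_mul, ← Matrix.mul_add, diagonal_add, star_eq_conjTranspose]
    congr 3
    funext k
    exact Complex.add_conj _
  rw [h, IsUnit.posDef_star_left_conjugate_iff hT, posDef_diagonal_iff]
  simp only [Complex.zero_lt_real, Nat.ofNat_pos, mul_pos_iff_of_pos_left]

lemma IsSectorialDecomp.posDef_add_conjTranspose_iff (h : IsSectorialDecomp A T φ) :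
    (A + Aᴴ).PosDef ↔ ∀ k, 0 < Real.cos (φ k) := by
  rw [h.2, phaseDiag, posDef_conj_diagonal_add_conjTranspose_iff h.1]
  simp only [mul_comm Complex.I, Complex.exp_ofReal_mul_I_re]

lemma IsCanonicalPhases.exists_abs_sub_lt (h : IsCanonicalPhases A φ) :
    ∃ m ∈ Set.Ioc (-Real.pi) Real.pi, ∀ k, |φ k - m| < Real.pi / 2 := by
  obtain ⟨-, hspread, hm_lower, hm_upper, -⟩ := h
  refine ⟨_, ⟨hm_lower, hm_upper⟩, fun k => ?_⟩
  have : Nonempty (Fin n) := ⟨k⟩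
  obtain ⟨i, hi⟩ := exists_eq_ciSup_of_finite (f := φ)
  obtain ⟨j, hj⟩ := exists_eq_ciInf_of_finite (f := φ)
  have hki : φ k ≤ φ i := hi ▸ le_ciSup (Set.finite_range φ).bddAbove k
  have hjk : φ j ≤ φ k := hj ▸ ciInf_le (Set.finite_range φ).bddBelow k
  rw [← hi, ← hj, abs_lt]
  constructor <;> linarith [hspread i j]

lemma IsCanonicalPhases.abs_lt (h : IsCanonicalPhases A φ) (k : Fin n) :
    |φ k| < Real.pi + Real.pi / 2 := by
  obtain ⟨m, hm, hφ⟩ := h.exists_abs_sub_lt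
  calc |φ k| ≤ |φ k - m| + |m| := by simpa using abs_add_le (φ k - m) m
    _ < Real.pi + Real.pi / 2 := by linarith [hφ k, abs_le.2 ⟨hm.1.le, hm.2⟩]

lemma abs_lt_pi_div_two_of_cos_pos {x : ℝ} (hx : |x| < Real.pi + Real.pi / 2)
    (hcos : 0 < Real.cos x) : |x| < Real.pi / 2 := by
  by_contra! h
  rw [← Real.cos_abs] at hcos
  exact hcos.not_ge (Real.cos_nonpos_of_pi_div_two_le_of_le h hx.le)

lemma strictlyPositiveReal_of_posDef_add_conjTranspose (hA : (A + Aᴴ).PosDef) :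
    StrictlyPositiveReal A := by
  have hsec := isSectorial_of_posDef_add_conjTranspose hA
  have hcan := hsec.isCanonicalPhases_phases
  obtain ⟨-, -, -, -, T, hdec⟩ := id hcan
  exact ⟨hsec, fun k => abs_lt.1 <| abs_lt_pi_div_two_of_cos_pos (hcan.abs_lt k) <|
    hdec.posDef_add_conjTranspose_iff.1 hA k⟩

end StrictlyPositiveReal

section PolarDecomposition

variable {A T P Q U W : Matrix (Fin n) (Fin n) ℂ} {φ : Fin n → ℝ}

lemma exists_eq_unitary_mul_posDef {ι : Type*} [Fintype ι] [DecidableEq ι] {T : Matrix ι ι ℂ}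
    (hT : IsUnit T) : ∃ W ∈ unitaryGroup ι ℂ, ∃ P : Matrix ι ι ℂ, P.PosDef ∧ T = W * P := by
  obtain ⟨P, hP, hPT⟩ := exists_posDef_mul_self_eq
    (PosDef.conjTranspose_mul_self T (mulVec_injective_of_isUnit hT))
  have hdet := (isUnit_iff_isUnit_det _).1 hP.isUnit
  refine ⟨T * P⁻¹, ?_, P, hP, (nonsing_inv_mul_cancel_right P T hdet).symm⟩
  rw [mem_unitaryGroup_iff', star_eq_conjTranspose, conjTranspose_mul, conjTranspose_nonsing_inv,
    hP.isHermitian.eq, Matrix.mul_assoc, ← Matrix.mul_assoc Tᴴ, ← hPT,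
    mul_nonsing_inv_cancel_right _ _ hdet, nonsing_inv_mul _ hdet]

lemma IsSectorial.conjTranspose_mul_mul_same (hA : IsSectorial A) (hT : IsUnit T) :
    IsSectorial (Tᴴ * A * T) := by
  intro x hx
  rw [← mulVec_mulVec, ← mulVec_mulVec, dotProduct_mulVec, ← star_mulVec]
  refine hA.dotProduct_mulVec_ne_zero fun h => ?_
  have hx0 : x = 0 := mulVec_injective_of_isUnit hT (h.trans (mulVec_zero T).symm)
  simp [hx0] at hx

lemma phaseDiag_mem_unitaryGroup (φ : Fin n → ℝ) : phaseDiag φ ∈ unitaryGroup (Fin n) ℂ := by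
  rw [mem_unitaryGroup_iff', phaseDiag, star_eq_conjTranspose, diagonal_conjTranspose,
    diagonal_mul_diagonal, ← diagonal_one]
  congr 1
  funext k
  rw [Pi.star_apply, mul_comm Complex.I, ← starRingEnd_apply, Complex.conj_mul',
    Complex.norm_exp_ofReal_mul_I, Complex.ofReal_one, one_pow]

lemma conj_phaseDiag_mem_unitaryGroup (hW : W ∈ unitaryGroup (Fin n) ℂ) (φ : Fin n → ℝ) :
    Wᴴ * phaseDiag φ * W ∈ unitaryGroup (Fin n) ℂ :=
  mul_mem (mul_mem (Unitary.star_mem hW) (phaseDiag_mem_unitaryGroup φ)) hW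

lemma IsSectorialDecomp.exists_isSymPolarDecomp (h : IsSectorialDecomp A T φ)
    (hA : IsSectorial A) :
    ∃ P, ∃ W ∈ unitaryGroup (Fin n) ℂ, IsSymPolarDecomp A P (Wᴴ * phaseDiag φ * W) := by
  obtain ⟨W, hW, P, hP, rfl⟩ := exists_eq_unitary_mul_posDef h.1
  have hPH : Pᴴ = P := hP.isHermitian
  have hdet := (isUnit_iff_isUnit_det _).1 hP.isUnit
  have hAP : A = P * (Wᴴ * phaseDiag φ * W) * P := by
    rw [h.2, conjTranspose_mul, hPH]
    simp only [Matrix.mul_assoc]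
  refine ⟨P, W, hW, hP, conj_phaseDiag_mem_unitaryGroup hW φ, ?_, hAP⟩
  have hU : Wᴴ * phaseDiag φ * W = P⁻¹ᴴ * A * P⁻¹ := by
    rw [hAP, conjTranspose_nonsing_inv, hPH, Matrix.mul_assoc P,
      nonsing_inv_mul_cancel_left _ _ hdet, mul_nonsing_inv_cancel_right _ _ hdet]
  rw [hU]
  exact hA.conjTranspose_mul_mul_same hP.inv.isUnit

/-- On an eigenvector `v` of `M` with eigenvalue `m`, the hypothesis reads
`m² * v⋆Wv = v⋆Wv`, and `v⋆Wv ≠ 0`. -/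
lemma eq_one_of_mul_mul_eq {M : Matrix (Fin n) (Fin n) ℂ} (hM : M.PosSemidef)
    (hW : IsSectorial W) (h : M * W * M = W) : M = 1 := by
  have heig (k : Fin n) : hM.isHermitian.eigenvalues k = 1 := by
    set m := hM.isHermitian.eigenvalues k
    set v : Fin n → ℂ := (hM.isHermitian.eigenvectorBasis k).ofLp with hv
    have hMv : M *ᵥ v = (m : ℂ) • v := hM.isHermitian.mulVec_eigenvectorBasis k
    have hvM : star v ᵥ* M = (m : ℂ) • star v := by
      simpa [star_mulVec, hM.isHermitian.eq] using congrArg star hMv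
    have hv0 : v ≠ 0 := by
      simpa [hv] using hM.isHermitian.eigenvectorBasis.orthonormal.ne_zero k
    have hquad : (m ^ 2 : ℂ) * (star v ⬝ᵥ W *ᵥ v) = star v ⬝ᵥ W *ᵥ v := by
      conv_rhs => rw [← h, ← mulVec_mulVec, ← mulVec_mulVec, hMv, dotProduct_mulVec, hvM,
        mulVec_smul, smul_dotProduct, dotProduct_smul]
      simp only [smul_eq_mul]
      ring
    have hm : m ^ 2 = 1 := by
      exact_mod_cast (mul_eq_right₀ (hW.dotProduct_mulVec_ne_zero hv0)).1 hquad
    exact (pow_eq_one_iff_of_nonneg (hM.eigenvalues_nonneg k) two_ne_zero).1 hm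
  rw [hM.isHermitian.spectral_theorem, show (RCLike.ofReal ∘ hM.isHermitian.eigenvalues : _ → ℂ) = 1
    from funext fun k => by simp [heig k]]
  simp

lemma mem_unitaryGroup_of_conj_mem_unitaryGroup (hW : W ∈ unitaryGroup (Fin n) ℂ)
    (hWs : IsSectorial W) (h : Tᴴ * W * T ∈ unitaryGroup (Fin n) ℂ) :
    T ∈ unitaryGroup (Fin n) ℂ := by
  have hinv : T * Tᴴ * W * (T * Tᴴ) * Wᴴ = 1 := by
    have := mem_unitaryGroup_iff.1 h
    rw [star_eq_conjTranspose, conjTranspose_mul, conjTranspose_mul, conjTranspose_conjTranspose,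
      ← Matrix.mul_assoc, ← Matrix.mul_assoc, mul_eq_one_comm] at this
    simpa only [Matrix.mul_assoc] using this
  have hMWM : T * Tᴴ * W * (T * Tᴴ) = W := by
    calc T * Tᴴ * W * (T * Tᴴ) = T * Tᴴ * W * (T * Tᴴ) * (Wᴴ * W) := by
          rw [← star_eq_conjTranspose W, mem_unitaryGroup_iff'.1 hW, Matrix.mul_one]
      _ = W := by rw [← Matrix.mul_assoc, hinv, Matrix.one_mul]
  exact mem_unitaryGroup_iff.2
    (eq_one_of_mul_mul_eq (posSemidef_self_mul_conjTranspose T) hWs hMWM)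

open scoped MatrixOrder Matrix.Norms.L2Operator in
lemma IsSymPolarDecomp.unique (hPU : IsSymPolarDecomp A P U) (hQW : IsSymPolarDecomp A Q W) :
    P = Q ∧ U = W := by
  obtain ⟨hP, hU, -, hA⟩ := hPU
  obtain ⟨hQ, hW, hWs, hA'⟩ := hQW
  have hdet := (isUnit_iff_isUnit_det _).1 hP.isUnit
  have hPH : Pᴴ = P := hP.isHermitian
  have hQH : Qᴴ = Q := hQ.isHermitian
  have hT : (Q * P⁻¹)ᴴ = P⁻¹ * Q := by
    rw [conjTranspose_mul, conjTranspose_nonsing_inv, hPH, hQH]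
  have hconj : (Q * P⁻¹)ᴴ * W * (Q * P⁻¹) = U := by
    calc (Q * P⁻¹)ᴴ * W * (Q * P⁻¹) = P⁻¹ * (Q * W * Q) * P⁻¹ := by
          rw [hT]; simp only [Matrix.mul_assoc]
      _ = U := by
          rw [← hA', hA, Matrix.mul_assoc P, nonsing_inv_mul_cancel_left _ _ hdet,
            mul_nonsing_inv_cancel_right _ _ hdet]
  have hunit := mem_unitaryGroup_of_conj_mem_unitaryGroup hW hWs (hconj.symm ▸ hU)
  have hsq : P ^ 2 = Q ^ 2 := by
    have h : P⁻¹ * Q * (Q * P⁻¹) = 1 := hT ▸ mem_unitaryGroup_iff'.1 hunit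
    calc P ^ 2 = P * (P⁻¹ * Q * (Q * P⁻¹)) * P := by rw [h, Matrix.mul_one, pow_two]
      _ = Q ^ 2 := by
          rw [Matrix.mul_assoc P⁻¹, mul_nonsing_inv_cancel_left _ _ hdet, ← Matrix.mul_assoc,
            nonsing_inv_mul_cancel_right _ _ hdet, pow_two]
  obtain rfl := (CFC.sq_eq_sq_iff P Q hP.posSemidef.nonneg hQ.posSemidef.nonneg).1 hsq
  exact ⟨rfl, hP.isUnit.mul_left_cancel (hP.isUnit.mul_right_cancel (hA.symm.trans hA'))⟩

lemma IsSymPolarDecomp.polarP_polarU (h : IsSymPolarDecomp A P U) :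
    IsSymPolarDecomp A (polarP A) (polarU A) := by
  have hex : ∃ P U, IsSymPolarDecomp A P U := ⟨P, U, h⟩
  simpa only [polarP, polarU, dif_pos hex] using hex.choose_spec.choose_spec

lemma IsSymPolarDecomp.polarP_eq (h : IsSymPolarDecomp A P U) : polarP A = P :=
  (h.polarP_polarU.unique h).1

lemma IsSymPolarDecomp.polarU_eq (h : IsSymPolarDecomp A P U) : polarU A = U :=
  (h.polarP_polarU.unique h).2

lemma IsSectorial.exists_polarU_eq (hA : IsSectorial A) :
    ∃ W ∈ unitaryGroup (Fin n) ℂ, polarU A = Wᴴ * phaseDiag (phases A) * W := by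
  obtain ⟨-, -, -, -, T, hdec⟩ := hA.isCanonicalPhases_phases
  obtain ⟨P, W, hW, hpol⟩ := hdec.exists_isSymPolarDecomp hA
  exact ⟨W, hW, hpol.polarU_eq⟩

lemma IsSectorial.polarU_mem_unitaryGroup (hA : IsSectorial A) :
    polarU A ∈ unitaryGroup (Fin n) ℂ := by
  obtain ⟨W, hW, hpol⟩ := hA.exists_polarU_eq
  exact hpol ▸ conj_phaseDiag_mem_unitaryGroup hW _

end PolarDecomposition

section PhaseRank

variable {A : Matrix (Fin n) (Fin n) ℂ}

lemma exp_I_mul_eq_one_iff {x : ℝ} (hx : |x| < 2 * Real.pi) :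
    Complex.exp (Complex.I * x) = 1 ↔ x = 0 := by
  refine ⟨fun h => ?_, fun h => by simp [h]⟩
  have hcos : Real.cos x = 1 := by
    rw [← Complex.exp_ofReal_mul_I_re, mul_comm, h, Complex.one_re]
  exact (Real.cos_eq_one_iff_of_lt_of_lt (abs_lt.1 hx).1 (abs_lt.1 hx).2).1 hcos

lemma rank_conj_diagonal_sub_one {ι K : Type*} [Fintype ι] [DecidableEq ι] [Field K] [StarRing K]
    {W : Matrix ι ι K} (hW : W ∈ unitaryGroup ι K) (d : ι → K) :
    (Wᴴ * diagonal d * W - 1).rank = {k | d k ≠ 1}.ncard := by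
  have hWu : IsUnit W := Unitary.isUnit_coe (U := ⟨W, hW⟩)
  have hsub : Wᴴ * diagonal d * W - 1 = Wᴴ * diagonal (fun k => d k - 1) * W := by
    rw [← diagonal_sub, diagonal_one, Matrix.mul_sub, Matrix.sub_mul, Matrix.mul_one,
      ← star_eq_conjTranspose, mem_unitaryGroup_iff'.1 hW]
  rw [hsub, rank_mul_eq_left_of_isUnit_det _ _ ((isUnit_iff_isUnit_det _).1 hWu),
    rank_mul_eq_right_of_isUnit_det _ _
      ((isUnit_iff_isUnit_det _).1 ((Matrix.isUnit_conjTranspose W).2 hWu)),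
    rank_diagonal, ← Nat.card_eq_fintype_card, ← Nat.card_coe_set_eq]
  simp only [ne_eq, sub_eq_zero, Set.coe_ofPred]

lemma IsSectorial.rank_polarU_sub_one (hA : IsSectorial A) : (polarU A - 1).rank = prank A := by
  obtain ⟨W, hW, hpol⟩ := hA.exists_polarU_eq
  have hlt (k : Fin n) : |phases A k| < 2 * Real.pi := by
    linarith [hA.isCanonicalPhases_phases.abs_lt k, Real.pi_pos]
  rw [hpol, phaseDiag, rank_conj_diagonal_sub_one hW, prank]
  simp only [ne_eq, exp_I_mul_eq_one_iff (hlt _)]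

end PhaseRank

section UnitaryDiagonalization

variable {ι : Type*} [Fintype ι] [DecidableEq ι]

open scoped Matrix.Norms.L2Operator in
lemma exists_isHermitian_exp_eq_of_mem_unitaryGroup {W : Matrix ι ι ℂ}
    (hW : W ∈ unitaryGroup ι ℂ) :
    ∃ H : Matrix ι ι ℂ, H.IsHermitian ∧ NormedSpace.exp (Complex.I • H) = W := by
  refine ⟨cfc (fun z : ℂ => (z.arg : ℂ)) W, IsSelfAdjoint.cfc_arg W, ?_⟩
  have : IsStarNormal W := ⟨(mem_unitaryGroup_iff'.1 hW).trans (mem_unitaryGroup_iff.1 hW).symm⟩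
  have hcont : ContinuousOn (fun z : ℂ => (z.arg : ℂ)) (spectrum ℂ W) :=
    (Matrix.finite_spectrum W).continuousOn _
  rw [← CFC.exp_eq_normedSpace_exp (𝕜 := ℂ), ← cfc_comp_smul .., ← cfc_comp' ..]
  conv_rhs => rw [← cfc_id' ℂ W]
  refine cfc_congr fun z hz => ?_
  have hnorm : ‖z‖ = 1 := spectrum.norm_eq_one_of_unitary hW hz
  simpa [← Complex.exp_eq_exp_ℂ, hnorm, mul_comm] using Complex.norm_mul_exp_arg_mul_I z

lemma submatrix_id_mem_unitaryGroup {R : Type*} [CommRing R] [StarRing R] {W : Matrix ι ι R}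
    (hW : W ∈ unitaryGroup ι R) (τ : Equiv.Perm ι) : W.submatrix τ id ∈ unitaryGroup ι R := by
  rw [mem_unitaryGroup_iff', star_eq_conjTranspose, conjTranspose_submatrix, submatrix_mul_equiv,
    ← star_eq_conjTranspose, mem_unitaryGroup_iff'.1 hW, submatrix_id_id]

lemma exists_unitary_phaseDiag {W : Matrix (Fin n) (Fin n) ℂ} (hW : W ∈ unitaryGroup (Fin n) ℂ) :
    ∃ Q ∈ unitaryGroup (Fin n) ℂ, ∃ φ : Fin n → ℝ, W = Qᴴ * phaseDiag φ * Q := by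
  obtain ⟨H, hH, rfl⟩ := exists_isHermitian_exp_eq_of_mem_unitaryGroup hW
  obtain ⟨Q, hQ, φ, rfl⟩ := exists_unitary_diagonal_of_isHermitian hH
  refine ⟨Q, hQ, φ, ?_⟩
  have hQinv : Q⁻¹ = Qᴴ := inv_eq_left_inv (mem_unitaryGroup_iff'.1 hQ)
  have hexp : phaseDiag φ =
      NormedSpace.exp (diagonal (Complex.I • fun k => (φ k : ℂ))) := by
    rw [Matrix.exp_diagonal, phaseDiag]
    congr 1
    funext k
    rw [Pi.coe_exp, Complex.exp_eq_exp_ℂ]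
    rfl
  rw [hexp, ← hQinv, ← Matrix.smul_mul, ← Matrix.mul_smul, ← diagonal_smul]
  exact Matrix.exp_conj' Q _ (Unitary.isUnit_coe (U := ⟨Q, hQ⟩))

lemma exp_I_mul_arg_exp_I_mul (x : ℝ) :
    Complex.exp (Complex.I * (Complex.exp (Complex.I * x)).arg) = Complex.exp (Complex.I * x) := by
  have h := Complex.norm_mul_exp_arg_mul_I (Complex.exp (Complex.I * x))
  rwa [mul_comm Complex.I (x : ℂ), Complex.norm_exp_ofReal_mul_I, Complex.ofReal_one, one_mul,
    mul_comm _ Complex.I, mul_comm (x : ℂ)] at h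

lemma exists_unitary_phaseDiag_antitone_abs {W : Matrix (Fin n) (Fin n) ℂ}
    (hW : W ∈ unitaryGroup (Fin n) ℂ) :
    ∃ Q ∈ unitaryGroup (Fin n) ℂ, ∃ φ : Fin n → ℝ, (∀ k, φ k ∈ Set.Ioc (-Real.pi) Real.pi) ∧
      Antitone (fun k => |φ k|) ∧ W = Qᴴ * phaseDiag φ * Q := by
  obtain ⟨Q, hQ, φ, rfl⟩ := exists_unitary_phaseDiag hW
  obtain ⟨τ, hτ⟩ := exists_perm_antitone_comp fun k => |(Complex.exp (Complex.I * φ k)).arg|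
  refine ⟨Q.submatrix τ id, submatrix_id_mem_unitaryGroup hQ τ,
    fun k => (Complex.exp (Complex.I * φ (τ k))).arg, fun k => Complex.arg_mem_Ioc _, hτ, ?_⟩
  rw [phaseDiag, phaseDiag, ← conj_submatrix_diagonal_comp Q _ τ]
  simp only [exp_I_mul_arg_exp_I_mul]
  rfl

end UnitaryDiagonalization

section SortedSpectrum

lemma roots_charpoly_conj_diagonal {ι R : Type*} [Fintype ι] [DecidableEq ι] [CommRing R]
    [IsDomain R] [StarRing R] {Q : Matrix ι ι R} (hQ : Q ∈ unitaryGroup ι R) (d : ι → R) :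
    (Qᴴ * diagonal d * Q).charpoly.roots = Finset.univ.val.map d := by
  have hprod : ∏ i, (Polynomial.X - Polynomial.C (d i)) =
      ((Finset.univ.val.map d).map fun a => Polynomial.X - Polynomial.C a).prod := by
    rw [Multiset.map_map]
    rfl
  rw [charpoly_mul_comm, ← Matrix.mul_assoc, ← star_eq_conjTranspose, mem_unitaryGroup_iff.1 hQ,
    Matrix.one_mul, charpoly_diagonal, hprod, Polynomial.roots_multiset_prod_X_sub_C]

lemma sort_map_univ_getD {α : Type*} [LinearOrder α] (f : Fin n → α) (k : Fin n) (a : α) :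
    ((Finset.univ.val.map f).sort (· ≤ ·)).getD k a = f (Tuple.sort f k) := by
  have hsort : (Finset.univ.val.map f).sort (· ≤ ·) = List.ofFn (f ∘ Tuple.sort f) := by
    refine List.Perm.eq_of_pairwise' (Multiset.pairwise_sort _ _)
      (List.pairwise_ofFn.2 fun i j hij => Tuple.monotone_sort f hij.le) ?_
    rw [← Multiset.coe_eq_coe, Multiset.sort_eq, List.ofFn_eq_map, ← Multiset.map_coe,
      ← Multiset.map_map]
    congr 1
    exact (congrArg Finset.val (Finset.map_univ_equiv (Tuple.sort f))).symm
  rw [hsort, List.getD_eq_getElem _ _ (by simp), List.getElem_ofFn, Function.comp_apply]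

lemma exists_perm_eigArg_eq {Q : Matrix (Fin n) (Fin n) ℂ} (hQ : Q ∈ unitaryGroup (Fin n) ℂ)
    {φ : Fin n → ℝ} (hφ : ∀ k, φ k ∈ Set.Ioc (-Real.pi) Real.pi) :
    ∃ σ : Equiv.Perm (Fin n), eigArg (Qᴴ * phaseDiag φ * Q) = φ ∘ σ := by
  refine ⟨Tuple.sort φ, funext fun k => ?_⟩
  have harg : Complex.arg ∘ (fun k => Complex.exp (Complex.I * φ k)) = φ := by
    funext k
    rw [Function.comp_apply, mul_comm, Complex.arg_exp_mul_I, toIocMod_eq_self]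
    simpa [two_mul] using hφ k
  rw [eigArg, phaseDiag, roots_charpoly_conj_diagonal hQ, Multiset.map_map, harg,
    sort_map_univ_getD, Function.comp_apply]

lemma eigRe_one : eigRe (1 : Matrix (Fin n) (Fin n) ℂ) = 1 := by
  funext k
  have h := roots_charpoly_conj_diagonal (one_mem (unitaryGroup (Fin n) ℂ)) 1
  rw [diagonal_one', conjTranspose_one, Matrix.mul_one, Matrix.mul_one] at h
  rw [eigRe, h, Multiset.map_map, sort_map_univ_getD]
  rfl

end SortedSpectrum

section Gauge

variable {Φ : (Fin n → ℝ) → ℝ} {x y : Fin n → ℝ}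

lemma IsSymmetricGauge.map_zero (hΦ : IsSymmetricGauge Φ) : Φ 0 = 0 := by
  simpa using hΦ.smul 0 0

lemma IsSymmetricGauge.nonneg (hΦ : IsSymmetricGauge Φ) (x : Fin n → ℝ) : 0 ≤ Φ x := by
  rcases eq_or_ne x 0 with rfl | hx
  · exact hΦ.map_zero.ge
  · exact (hΦ.pos x hx).le

lemma IsSymmetricGauge.map_eq_of_abs_eq (hΦ : IsSymmetricGauge Φ) (h : ∀ k, |x k| = |y k|) :
    Φ x = Φ y := by
  rw [← hΦ.abs x, ← hΦ.abs y, funext h]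

/-- If `y'` flips the sign of the coordinate `y k`, then `Function.update y k a` lies on the
segment from `y'` to `y`. -/
lemma IsSymmetricGauge.map_update_le (hΦ : IsSymmetricGauge Φ) {k : Fin n} {a : ℝ}
    (ha : |a| ≤ |y k|) : Φ (Function.update y k a) ≤ Φ y := by
  obtain ⟨s, hs, rfl⟩ : ∃ s : ℝ, |s| ≤ 1 ∧ s * y k = a := by
    rcases eq_or_ne (y k) 0 with h0 | h0
    · exact ⟨0, by simp, by simpa [h0, eq_comm] using ha⟩
    · exact ⟨a / y k, by rwa [abs_div, div_le_one (abs_pos.2 h0)], div_mul_cancel₀ a h0⟩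
  obtain ⟨hs_lower, hs_upper⟩ := abs_le.1 hs
  set y' := Function.update y k (-y k)
  have hflip : Φ y' = Φ y := hΦ.map_eq_of_abs_eq fun j => by
    rcases eq_or_ne j k with rfl | hj <;> simp [y', *]
  have hsegment : Function.update y k (s * y k) = ((1 + s) / 2) • y + ((1 - s) / 2) • y' := by
    funext j
    rcases eq_or_ne j k with rfl | hj
    · simp only [Function.update_self, Pi.add_apply, Pi.smul_apply, smul_eq_mul, y']
      ring
    · simp only [Function.update_of_ne hj, Pi.add_apply, Pi.smul_apply, smul_eq_mul, y']
      ring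
  calc Φ (Function.update y k (s * y k))
      ≤ Φ (((1 + s) / 2) • y) + Φ (((1 - s) / 2) • y') := hsegment ▸ hΦ.subadd _ _
    _ = Φ y := by
      rw [hΦ.smul, hΦ.smul, hflip, abs_of_nonneg (by linarith), abs_of_nonneg (by linarith)]
      ring

lemma IsSymmetricGauge.mono (hΦ : IsSymmetricGauge Φ) (h : ∀ k, |x k| ≤ |y k|) : Φ x ≤ Φ y := by
  suffices ∀ s : Finset (Fin n), Φ (s.piecewise x y) ≤ Φ y by simpa using this Finset.univ
  intro s
  induction s using Finset.induction_on with
  | empty => simp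
  | insert k s hk ih =>
    rw [Finset.piecewise_insert]
    exact (hΦ.map_update_le (by simpa [hk] using h k)).trans ih

lemma IsSymmetricGauge.le_of_shift (hΦ : IsSymmetricGauge Φ) {r : ℕ}
    (hx : ∀ k : Fin n, (k : ℕ) < r → x k = 0)
    (hxy : ∀ i j : Fin n, (j : ℕ) = i + r → |x j| ≤ |y i|) : Φ x ≤ Φ y := by
  rcases isEmpty_or_nonempty (Fin n) with _ | ⟨⟨k⟩⟩
  · rw [Subsingleton.elim x y]
  have : NeZero n := ⟨by rintro rfl; exact k.elim0⟩
  rw [← hΦ.perm (Equiv.subRight (Fin.ofNat n r)) y]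
  refine hΦ.mono fun j => ?_
  rcases lt_or_ge (j : ℕ) r with hj | hj
  · simp [hx j hj]
  · refine hxy _ j ?_
    have hr : r < n := hj.trans_lt j.2
    rw [Equiv.subRight_apply, Fin.sub_val_of_le, Fin.val_ofNat, Nat.mod_eq_of_lt hr]
    · omega
    · simpa [Fin.le_def, Nat.mod_eq_of_lt hr] using hj

end Gauge

section Interlacing

variable {S : Submodule ℂ (Fin n → ℂ)} {i j : Fin n}

lemma exists_mem_mulVec_eq_zero {K : Type*} [Field K] {S : Submodule K (Fin n → K)} {i j : Fin n}
    (Q V : Matrix (Fin n) (Fin n) K) (hij : n + i ≤ j + Module.finrank K S) :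
    ∃ x ∈ S, x ≠ 0 ∧ (∀ k < i, (Q *ᵥ x) k = 0) ∧ ∀ k, j < k → (V *ᵥ x) k = 0 := by
  let L : S →ₗ[K] (Finset.Iio i → K) × (Finset.Ioi j → K) :=
    ((LinearMap.funLeft K K Subtype.val ∘ₗ Q.mulVecLin).prod
      (LinearMap.funLeft K K Subtype.val ∘ₗ V.mulVecLin)) ∘ₗ S.subtype
  have hker : LinearMap.ker L ≠ ⊥ := LinearMap.ker_ne_bot_of_finrank_lt <| by
    simp only [Module.finrank_prod, Module.finrank_fintype_fun_eq_card, Fintype.card_coe,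
      Fin.card_Iio, Fin.card_Ioi]
    omega
  obtain ⟨x, hx, hx0⟩ := Submodule.exists_mem_ne_zero_of_ne_bot hker
  obtain ⟨hQ, hV⟩ := Prod.ext_iff.1 (LinearMap.mem_ker.1 hx)
  exact ⟨x, x.2, by simpa using hx0, fun k hk => congrFun hQ ⟨k, Finset.mem_Iio.2 hk⟩,
    fun k hk => congrFun hV ⟨k, Finset.mem_Ioi.2 hk⟩⟩

/-- The Courant–Fischer dimension count, relative to a subspace. -/
lemma le_of_forall_mem_sum_mul_norm_sq_le {Q V : Matrix (Fin n) (Fin n) ℂ}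
    (hQ : Q ∈ unitaryGroup (Fin n) ℂ) (hV : V ∈ unitaryGroup (Fin n) ℂ) {a b : Fin n → ℝ}
    (ha : Monotone a) (hb : Monotone b)
    (hab : ∀ x ∈ S, ∑ k, a k * ‖(Q *ᵥ x) k‖ ^ 2 ≤ ∑ k, b k * ‖(V *ᵥ x) k‖ ^ 2)
    (hij : n + i ≤ j + Module.finrank ℂ S) : a i ≤ b j := by
  obtain ⟨x, hxS, hx0, hQx, hVx⟩ := exists_mem_mulVec_eq_zero Q V hij
  have hpos : 0 < ∑ k, ‖x k‖ ^ 2 := by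
    have h0 : WithLp.toLp 2 x ≠ 0 := by simpa using hx0
    rw [← EuclideanSpace.norm_sq_eq (WithLp.toLp 2 x)]
    positivity
  refine le_of_mul_le_mul_right ?_ hpos
  calc a i * ∑ k, ‖x k‖ ^ 2 = ∑ k, a i * ‖(Q *ᵥ x) k‖ ^ 2 := by
        rw [← sum_norm_sq_mulVec hQ, Finset.mul_sum]
    _ ≤ ∑ k, a k * ‖(Q *ᵥ x) k‖ ^ 2 := Finset.sum_le_sum fun k _ => by
        rcases lt_or_ge k i with hk | hk
        · simp [hQx k hk]
        · gcongr
          exact ha hk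
    _ ≤ ∑ k, b k * ‖(V *ᵥ x) k‖ ^ 2 := hab x hxS
    _ ≤ ∑ k, b j * ‖(V *ᵥ x) k‖ ^ 2 := Finset.sum_le_sum fun k _ => by
        rcases lt_or_ge j k with hk | hk
        · simp [hVx k hk]
        · gcongr
          exact hb hk
    _ = b j * ∑ k, ‖x k‖ ^ 2 := by rw [← sum_norm_sq_mulVec hV, Finset.mul_sum]

lemma re_star_dotProduct_conj_phaseDiag_mulVec (V : Matrix (Fin n) (Fin n) ℂ) (θ : Fin n → ℝ)
    (x : Fin n → ℂ) :
    (star x ⬝ᵥ (Vᴴ * phaseDiag θ * V) *ᵥ x).re = ∑ k, Real.cos (θ k) * ‖(V *ᵥ x) k‖ ^ 2 := by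
  rw [phaseDiag, star_dotProduct_conj_diagonal_mulVec, Complex.re_sum]
  simp only [Complex.re_mul_ofReal, mul_comm Complex.I, Complex.exp_ofReal_mul_I_re]

lemma monotone_cos_of_antitone_abs {φ : Fin n → ℝ} (hφ : Antitone fun k => |φ k|)
    (hπ : ∀ k, |φ k| ≤ Real.pi) : Monotone fun k => Real.cos (φ k) := fun i j hij => by
  simpa only [Real.cos_abs] using
    Real.cos_le_cos_of_nonneg_of_le_pi (abs_nonneg _) (hπ i) (hφ hij)

/-- On the fixed space of `B` the numerical ranges of `Uᴴ * B` and `Uᴴ` agree. -/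
lemma abs_le_abs_of_conjTranspose_mul_eq {Q V B : Matrix (Fin n) (Fin n) ℂ} {θ φ : Fin n → ℝ}
    (hQ : Q ∈ unitaryGroup (Fin n) ℂ) (hV : V ∈ unitaryGroup (Fin n) ℂ)
    (hθ : Antitone fun k => |θ k|) (hθπ : ∀ k, |θ k| ≤ Real.pi)
    (hφ : Antitone fun k => |φ k|) (hφπ : ∀ k, |φ k| ≤ Real.pi)
    (hB : (Vᴴ * phaseDiag θ * V)ᴴ * B = Qᴴ * phaseDiag φ * Q)
    (hij : i + (B - 1).rank ≤ j) : |θ j| ≤ |φ i| := by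
  have hcos : Real.cos (φ i) ≤ Real.cos (θ j) := by
    refine le_of_forall_mem_sum_mul_norm_sq_le (S := LinearMap.ker (B - 1).mulVecLin) hQ hV
      (monotone_cos_of_antitone_abs hφ hφπ) (monotone_cos_of_antitone_abs hθ hθπ)
      (fun x hx => ?_) ?_
    · have hBx : B *ᵥ x = x := by simpa [sub_mulVec, sub_eq_zero] using hx
      rw [← re_star_dotProduct_conj_phaseDiag_mulVec, ← re_star_dotProduct_conj_phaseDiag_mulVec,
        ← hB, ← mulVec_mulVec, hBx, star_dotProduct_conjTranspose_mulVec, RCLike.star_def,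
        Complex.conj_re]
    · have := (B - 1).mulVecLin.finrank_range_add_finrank_ker
      rw [Module.finrank_fin_fun] at this
      rw [Matrix.rank] at hij
      omega
  by_contra! h
  have := Real.cos_lt_cos_of_nonneg_of_le_pi (abs_nonneg _) (hθπ j) h
  rw [Real.cos_abs, Real.cos_abs] at this
  exact hcos.not_gt this

end Interlacing

section PhaseTruncation

variable {V B : Matrix (Fin n) (Fin n) ℂ} {θ φ : Fin n → ℝ} {r : ℕ}

/-- The phase vector `(θ₁, …, θᵣ, 0, …, 0)` of the truncated unitary factor `Û_r`. -/
def phaseTrunc (θ : Fin n → ℝ) (r : ℕ) (k : Fin n) : ℝ :=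
  if (k : ℕ) < r then θ k else 0

lemma phaseTrunc_of_lt {k : Fin n} (hk : (k : ℕ) < r) : phaseTrunc θ r k = θ k := if_pos hk

lemma phaseTrunc_of_le {k : Fin n} (hk : r ≤ k) : phaseTrunc θ r k = 0 := if_neg hk.not_gt

lemma phaseDiag_phaseTrunc (θ : Fin n → ℝ) (r : ℕ) :
    phaseDiag (phaseTrunc θ r) =
      diagonal fun k : Fin n => if (k : ℕ) < r then Complex.exp (Complex.I * (θ k : ℂ)) else 1 := by
  rw [phaseDiag]
  congr 1
  funext k
  split_ifs with hk
  · rw [phaseTrunc_of_lt hk]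
  · rw [phaseTrunc_of_le (not_lt.1 hk), Complex.ofReal_zero, mul_zero, Complex.exp_zero]

lemma rank_conj_phaseDiag_phaseTrunc_sub_one_le (hV : V ∈ unitaryGroup (Fin n) ℂ)
    (θ : Fin n → ℝ) (r : ℕ) : (Vᴴ * phaseDiag (phaseTrunc θ r) * V - 1).rank ≤ r := by
  rw [phaseDiag_phaseTrunc, rank_conj_diagonal_sub_one hV]
  calc _ ≤ (Finset.range r : Set ℕ).ncard := by
        refine Set.ncard_le_ncard_of_injOn Fin.val (fun k hk => ?_) Fin.val_injective.injOn
        simp only [Set.mem_ofPred_eq, ne_eq, ite_eq_right_iff, Classical.not_imp] at hk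
        exact Finset.mem_coe.2 (Finset.mem_range.2 hk.1)
    _ = r := by rw [Set.ncard_coe_finset, Finset.card_range]

lemma conjTranspose_conj_phaseDiag_mul (hV : V ∈ unitaryGroup (Fin n) ℂ) (θ φ : Fin n → ℝ) :
    (Vᴴ * phaseDiag θ * V)ᴴ * (Vᴴ * phaseDiag φ * V) = Vᴴ * phaseDiag (φ - θ) * V := by
  have hdiag : (phaseDiag θ)ᴴ * phaseDiag φ = phaseDiag (φ - θ) := by
    rw [phaseDiag, phaseDiag, phaseDiag, diagonal_conjTranspose, diagonal_mul_diagonal]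
    congr 1
    funext k
    rw [Pi.star_apply, RCLike.star_def, ← Complex.exp_conj, ← Complex.exp_add]
    congr 1
    simp only [map_mul, Complex.conj_I, Complex.conj_ofReal, Pi.sub_apply, Complex.ofReal_sub]
    ring
  have hVV : V * Vᴴ = 1 := mem_unitaryGroup_iff.1 hV
  calc (Vᴴ * phaseDiag θ * V)ᴴ * (Vᴴ * phaseDiag φ * V)
      = Vᴴ * ((phaseDiag θ)ᴴ * (V * Vᴴ) * phaseDiag φ) * V := by
        simp only [conjTranspose_mul, conjTranspose_conjTranspose, Matrix.mul_assoc]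
    _ = Vᴴ * phaseDiag (φ - θ) * V := by rw [hVV, Matrix.mul_one, hdiag]

lemma strictlyPositiveReal_conj_phaseDiag (hV : IsUnit V)
    (hφ : ∀ k, φ k ∈ Set.Ioo (-(Real.pi / 2)) (Real.pi / 2)) :
    StrictlyPositiveReal (Vᴴ * phaseDiag φ * V) :=
  strictlyPositiveReal_of_posDef_add_conjTranspose <|
    (IsSectorialDecomp.posDef_add_conjTranspose_iff ⟨hV, rfl⟩).2 fun k =>
      Real.cos_pos_of_mem_Ioo (hφ k)

lemma IsSymmetricGauge.eigArg_phaseTrunc_le {Φ : (Fin n → ℝ) → ℝ} (hΦ : IsSymmetricGauge Φ)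
    (hV : V ∈ unitaryGroup (Fin n) ℂ) (hθ : Antitone fun k => |θ k|)
    (hθπ : ∀ k, |θ k| < Real.pi) (hB : B ∈ unitaryGroup (Fin n) ℂ) (hr : (B - 1).rank ≤ r) :
    Φ (eigArg ((Vᴴ * phaseDiag θ * V)ᴴ * (Vᴴ * phaseDiag (phaseTrunc θ r) * V))) ≤
      Φ (eigArg ((Vᴴ * phaseDiag θ * V)ᴴ * B)) := by
  obtain ⟨Q, hQ, φ, hφπ, hφ, hQB⟩ := exists_unitary_phaseDiag_antitone_abs
    (mul_mem (Unitary.star_mem (conj_phaseDiag_mem_unitaryGroup hV θ)) hB)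
  have hlt {k : Fin n} (hk : (k : ℕ) < r) : (phaseTrunc θ r - θ) k = 0 := by
    rw [Pi.sub_apply, phaseTrunc_of_lt hk, sub_self]
  have hle {k : Fin n} (hk : r ≤ k) : (phaseTrunc θ r - θ) k = -θ k := by
    rw [Pi.sub_apply, phaseTrunc_of_le hk, zero_sub]
  have hrange (k : Fin n) : (phaseTrunc θ r - θ) k ∈ Set.Ioc (-Real.pi) Real.pi := by
    rcases lt_or_ge (k : ℕ) r with hk | hk
    · rw [hlt hk]
      exact ⟨neg_lt_zero.2 Real.pi_pos, Real.pi_pos.le⟩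
    · rw [hle hk]
      exact ⟨neg_lt_neg (abs_lt.1 (hθπ k)).2, (neg_lt.1 (abs_lt.1 (hθπ k)).1).le⟩
  obtain ⟨σ, hσ⟩ := exists_perm_eigArg_eq hV hrange
  obtain ⟨τ, hτ⟩ := exists_perm_eigArg_eq hQ hφπ
  rw [conjTranspose_conj_phaseDiag_mul hV, hσ, ← star_eq_conjTranspose (_ * V), hQB, hτ, hΦ.perm,
    hΦ.perm]
  refine hΦ.le_of_shift (fun _ => hlt) fun i j hij => ?_
  rw [hle (by omega), abs_neg]
  exact abs_le_abs_of_conjTranspose_mul_eq hQ hV hθ (fun k => (hθπ k).le) hφ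
    (fun k => abs_le.2 ⟨(hφπ k).1.le, (hφπ k).2⟩) hQB (by omega)

end PhaseTruncation

section GeodesicDistance

variable {A B P U W : Matrix (Fin n) (Fin n) ℂ} {Φ₁ Φ₂ : (Fin n → ℝ) → ℝ}

lemma gauge_eigArg_le_geoDist (Φ₁ Φ₂ : (Fin n → ℝ) → ℝ) (A B : Matrix (Fin n) (Fin n) ℂ) :
    Φ₂ (eigArg ((polarU A)ᴴ * polarU B)) ≤ geoDist Φ₁ Φ₂ A B :=
  Real.le_sqrt_of_sq_le (le_add_of_nonneg_left (sq_nonneg _))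

lemma geoDist_of_isSymPolarDecomp (hΦ₁ : Φ₁ 0 = 0) (hΦ₂ : IsSymmetricGauge Φ₂)
    (hA : IsSymPolarDecomp A P U) (hB : IsSymPolarDecomp B P W) :
    geoDist Φ₁ Φ₂ A B = Φ₂ (eigArg (Uᴴ * W)) := by
  have hdet := (isUnit_iff_isUnit_det _).1 hA.1.isUnit
  have hlog : (fun k => Real.log (eigRe (P⁻¹ * P ^ 2 * P⁻¹) k)) = 0 := by
    rw [pow_two, nonsing_inv_mul_cancel_left _ _ hdet, mul_nonsing_inv _ hdet, eigRe_one]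
    exact funext fun _ => Real.log_one
  rw [geoDist, hA.polarP_eq, hB.polarP_eq, hA.polarU_eq, hB.polarU_eq, hlog, hΦ₁,
    zero_pow two_ne_zero, zero_add, Real.sqrt_sq (hΦ₂.nonneg _)]

end GeodesicDistance

theorem geoDist_low_prank_approximation_general {Φ₁ Φ₂ : (Fin n → ℝ) → ℝ} (hΦ₁ : Φ₁ 0 = 0)
    (hΦ₂ : IsSymmetricGauge Φ₂) {A P V : Matrix (Fin n) (Fin n) ℂ} {θ : Fin n → ℝ}
    (hPU : IsSymPolarDecomp A P (Vᴴ * phaseDiag θ * V)) (hV : V ∈ unitaryGroup (Fin n) ℂ)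
    (hθ : Antitone fun k => |θ k|) (hθrange : ∀ k, θ k ∈ Set.Ioo (-(Real.pi / 2)) (Real.pi / 2))
    (r : ℕ) {Ar : Matrix (Fin n) (Fin n) ℂ}
    (hAr : Ar = P * (Vᴴ * phaseDiag (phaseTrunc θ r) * V) * P) :
    StrictlyPositiveReal Ar ∧ prank Ar ≤ r ∧
      ∀ B, IsSectorial B → prank B ≤ r → geoDist Φ₁ Φ₂ A Ar ≤ geoDist Φ₁ Φ₂ A B := by
  have hVunit : IsUnit V := Unitary.isUnit_coe (U := ⟨V, hV⟩)
  have htrunc (k : Fin n) : phaseTrunc θ r k ∈ Set.Ioo (-(Real.pi / 2)) (Real.pi / 2) := by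
    rw [phaseTrunc]
    split_ifs
    exacts [hθrange k, ⟨neg_lt_zero.2 Real.pi_div_two_pos, Real.pi_div_two_pos⟩]
  have hθπ (k : Fin n) : |θ k| < Real.pi :=
    (abs_lt.2 (hθrange k)).trans (half_lt_self Real.pi_pos)
  have hpolar : IsSymPolarDecomp Ar P (Vᴴ * phaseDiag (phaseTrunc θ r) * V) :=
    ⟨hPU.1, conj_phaseDiag_mem_unitaryGroup hV _,
      (strictlyPositiveReal_conj_phaseDiag hVunit htrunc).1, hAr⟩
  have hcongr : Ar = (V * P)ᴴ * phaseDiag (phaseTrunc θ r) * (V * P) := by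
    rw [hAr, conjTranspose_mul, hPU.1.isHermitian.eq]
    simp only [Matrix.mul_assoc]
  have hpos : StrictlyPositiveReal Ar :=
    hcongr ▸ strictlyPositiveReal_conj_phaseDiag (hVunit.mul hPU.1.isUnit) htrunc
  refine ⟨hpos, ?_, fun B hB hBr => ?_⟩
  · rw [← hpos.1.rank_polarU_sub_one, hpolar.polarU_eq]
    exact rank_conj_phaseDiag_phaseTrunc_sub_one_le hV θ r
  · rw [geoDist_of_isSymPolarDecomp hΦ₁ hΦ₂ hPU hpolar]
    refine le_trans ?_ (gauge_eigArg_le_geoDist Φ₁ Φ₂ A B)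
    rw [hPU.polarU_eq]
    exact hΦ₂.eigArg_phaseTrunc_le hV hθ hθπ hB.polarU_mem_unitaryGroup
      (hB.rank_polarU_sub_one.trans_le hBr)

/-- the geodesic-distance low phase-rank approximation problem is
solved by truncating the phases of the unitary polar factor. -/
theorem geoDist_low_prank_approximation
    (hn : 1 ≤ n) (Φ₁ Φ₂ : (Fin n → ℝ) → ℝ)
    (hΦ₁ : IsSymmetricGauge Φ₁) (hΦ₂ : IsSymmetricGauge Φ₂)
    (A P U V : Matrix (Fin n) (Fin n) ℂ) (θ : Fin n → ℝ) (r : ℕ) (hr : r ≤ n)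
    (hA : StrictlyPositiveReal A)
    (hPU : IsSymPolarDecomp A P U)
    (hV : V ∈ Matrix.unitaryGroup (Fin n) ℂ)
    (hθsort : ∀ i j : Fin n, i ≤ j → |θ j| ≤ |θ i|)
    (hθrange : ∀ k, θ k ∈ Set.Ioo (-(Real.pi / 2)) (Real.pi / 2))
    (hU : U = Vᴴ * phaseDiag θ * V)
    (Ur Ar : Matrix (Fin n) (Fin n) ℂ)
    (hUr : Ur = Vᴴ * Matrix.diagonal (fun k : Fin n =>
      if (k : ℕ) < r then Complex.exp (Complex.I * (θ k : ℂ)) else 1) * V)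
    (hAr : Ar = P * Ur * P) :
    StrictlyPositiveReal Ar ∧ prank Ar ≤ r ∧
    ∀ B : Matrix (Fin n) (Fin n) ℂ, StrictlyPositiveReal B → prank B ≤ r →
      geoDist Φ₁ Φ₂ A Ar ≤ geoDist Φ₁ Φ₂ A B := by
  rw [← phaseDiag_phaseTrunc] at hUr
  subst hU hUr
  obtain ⟨hpos, hrank, hmin⟩ := geoDist_low_prank_approximation_general hΦ₁.map_zero hΦ₂ hPU hV
    (fun i j => hθsort i j) hθrange r hAr
  exact ⟨hpos, hrank, fun B hB => hmin B hB.1⟩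

end LowPrank
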